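/- (Exact penalty: local minimizers of (P).) Suppose β > L·L_Ō·max{θ_w, 1}^L. If (w*,b*,v*,u*) ∈ Ω₁ satisfies O(w*,v*,u*) < θ, then (w*,b*,v*,u*) is a local minimizer of Ō over Ω₁ if and only if it is a local minimizer of O over Ω₂. -/

import Mathlib

/-!
Given a point `z` of `Ω₂`, keep its weights and biases and recompute `v` and `u` by the forward pass
of the network; the result `forward z` lies in `Ω₁`. Three facts give the equivalence.

* `forward` is continuous and fixes the points of `Ω₁`, so for `z` near `z*` both `z` and `forward z`
  stay near `z*`, and both have penalized objective below `θ`.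
* On the level set the sum of the column norms of each `W_ℓ` is at most `θ_w`
  (`colSum_le_thw`). As the leaky ReLU is 1-Lipschitz, the layerwise errors satisfy
  `d_ℓ ≤ e_ℓ + Θ d_{ℓ-1}` with `Θ = max θ_w 1` and `e_ℓ` the penalty of layer `ℓ`
  (`layer_error`). Layer `0` carries no error, so at most `2L - 1 ≤ L²` blocks of `(v, u)` contribute
  to the Euclidean distance, each at most `Θ^L` times the penalty (`l2dist_forward_le`).
* Hence `Ō(forward z) ≤ Ō(z) + L_Ō ‖z - forward z‖ ≤ Ō(z) + β · penalty = O(z)`.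

The converse direction holds because `Ω₁ ⊆ Ω₂` and `O = Ō` on `Ω₁`.
-/

open Finset Filter Topology

noncomputable section

/-- Leaky ReLU activation with slope `α`. -/
def lrelu (α t : ℝ) : ℝ := max t (α * t)

/-- Weight variables: `W ℓ` here is `W_{ℓ+1}` of the paper (layers `1,…,L`, `L = M+1`). -/
abbrev Wt (M : ℕ) (Nd : ℕ → ℕ) : Type :=
  (ℓ : Fin (M + 1)) → Fin (Nd (ℓ.1 + 1)) → Fin (Nd ℓ.1) → ℝ

/-- Bias variables. -/
abbrev Bs (M : ℕ) (Nd : ℕ → ℕ) : Type :=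
  (ℓ : Fin (M + 1)) → Fin (Nd (ℓ.1 + 1)) → ℝ

/-- Auxiliary `v` variables (`v_{n,ℓ}`, `ℓ = 0,…,L`). -/
abbrev Vs (M N : ℕ) (Nd : ℕ → ℕ) : Type :=
  Fin N → (ℓ : Fin (M + 2)) → Fin (Nd ℓ.1) → ℝ

/-- Auxiliary `u` variables (`u n ℓ` is `u_{n,ℓ+1}` of the paper). -/
abbrev Us (M N : ℕ) (Nd : ℕ → ℕ) : Type :=
  Fin N → (ℓ : Fin (M + 1)) → Fin (Nd (ℓ.1 + 1)) → ℝ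

/-- A full point `(w, b, v, u)` of the variable space. -/
abbrev Pt (M N : ℕ) (Nd : ℕ → ℕ) : Type :=
  Wt M Nd × Bs M Nd × Vs M N Nd × Us M N Nd

variable {M N : ℕ} {Nd : ℕ → ℕ}

/-- Group sparse regularizer `R₁` (sum of Euclidean norms of the columns). -/
def R1 (lw : ℝ) (W : Wt M Nd) : ℝ :=
  lw * ∑ ℓ : Fin (M + 1), ∑ j : Fin (Nd ℓ.1),
    Real.sqrt (∑ i : Fin (Nd (ℓ.1 + 1)), (W ℓ i j) ^ 2)

/-- Regularizer `R₂ = λ_v ‖v‖²`. -/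
def R2 (lv : ℝ) (v : Vs M N Nd) : ℝ :=
  lv * ∑ n : Fin N, ∑ ℓ : Fin (M + 1), ∑ i : Fin (Nd (ℓ.1 + 1)), (v n ℓ.succ i) ^ 2

/-- Objective `Ō` of problem (P). -/
def Obar (lw lv : ℝ) (y : Fin N → Fin (Nd (M + 1)) → ℝ) (z : Pt M N Nd) : ℝ :=
  (1 / (N : ℝ)) * ∑ n : Fin N, ∑ i : Fin (Nd (M + 1)),
      (z.2.2.1 n (Fin.last (M + 1)) i - y n i) ^ 2
    + R1 lw z.1 + R2 lv z.2.2.1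

/-- Penalized objective `O` of problem (PP). -/
def Opp (α β lw lv : ℝ) (y : Fin N → Fin (Nd (M + 1)) → ℝ) (z : Pt M N Nd) : ℝ :=
  Obar lw lv y z
    + β * ∑ n : Fin N, ∑ ℓ : Fin (M + 1), ∑ i : Fin (Nd (ℓ.1 + 1)),
        (z.2.2.1 n ℓ.succ i - lrelu α (z.2.2.2 n ℓ i))

/-- Input convention `v_{n,0} = x_n`. -/
def inputEq (x : Fin N → Fin (Nd 0) → ℝ) (z : Pt M N Nd) : Prop :=
  ∀ n : Fin N, z.2.2.1 n ⟨0, Nat.succ_pos _⟩ = x n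

/-- Linear constraints `u_{n,ℓ} = W_ℓ v_{n,ℓ-1} + b_ℓ`. -/
def linEq (z : Pt M N Nd) : Prop :=
  ∀ (n : Fin N) (ℓ : Fin (M + 1)) (i : Fin (Nd (ℓ.1 + 1))),
    z.2.2.2 n ℓ i = (∑ j : Fin (Nd ℓ.1), z.1 ℓ i j * z.2.2.1 n ℓ.castSucc j) + z.2.1 ℓ i

/-- Cone constraints `v ≥ u`, `v ≥ α u` (componentwise). -/
def inCone (α : ℝ) (z : Pt M N Nd) : Prop :=
  ∀ (n : Fin N) (ℓ : Fin (M + 1)) (i : Fin (Nd (ℓ.1 + 1))),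
    z.2.2.2 n ℓ i ≤ z.2.2.1 n ℓ.succ i ∧ α * z.2.2.2 n ℓ i ≤ z.2.2.1 n ℓ.succ i

/-- Feasible set `Ω₂` of problem (PP). -/
def feas2 (α : ℝ) (x : Fin N → Fin (Nd 0) → ℝ) (z : Pt M N Nd) : Prop :=
  inputEq x z ∧ linEq z ∧ inCone α z

/-- Feasible set `Ω₁` of problem (P). -/
def feas1 (α : ℝ) (x : Fin N → Fin (Nd 0) → ℝ) (z : Pt M N Nd) : Prop :=
  inputEq x z ∧ linEq z ∧
    ∀ (n : Fin N) (ℓ : Fin (M + 1)) (i : Fin (Nd (ℓ.1 + 1))),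
      z.2.2.1 n ℓ.succ i = lrelu α (z.2.2.2 n ℓ i)

/-- Euclidean (ℓ²) distance on the variable space. -/
def l2dist (z z' : Pt M N Nd) : ℝ :=
  Real.sqrt
    ((∑ ℓ : Fin (M + 1), ∑ i : Fin (Nd (ℓ.1 + 1)), ∑ j : Fin (Nd ℓ.1),
        (z.1 ℓ i j - z'.1 ℓ i j) ^ 2)
      + (∑ ℓ : Fin (M + 1), ∑ i : Fin (Nd (ℓ.1 + 1)), (z.2.1 ℓ i - z'.2.1 ℓ i) ^ 2)
      + (∑ n : Fin N, ∑ ℓ : Fin (M + 2), ∑ i : Fin (Nd ℓ.1),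
          (z.2.2.1 n ℓ i - z'.2.2.1 n ℓ i) ^ 2)
      + (∑ n : Fin N, ∑ ℓ : Fin (M + 1), ∑ i : Fin (Nd (ℓ.1 + 1)),
          (z.2.2.2 n ℓ i - z'.2.2.2 n ℓ i) ^ 2))

/-- `θ_w = (θ/λ_w)·√(N_{L+2} + N₀)`. -/
def thw (M : ℕ) (Nd : ℕ → ℕ) (θ lw : ℝ) : ℝ :=
  (θ / lw) * Real.sqrt ((∑ ℓ : Fin (M + 1), (Nd (ℓ.1 + 1) : ℝ)) + (Nd 0 : ℝ))

/-- `θ_v = √(θ/λ_v)`. -/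
def thv (θ lv : ℝ) : ℝ := Real.sqrt (θ / lv)

/-- The level set `Ω_θ`. -/
def levelSet (α β lw lv θ : ℝ) (x : Fin N → Fin (Nd 0) → ℝ)
    (y : Fin N → Fin (Nd (M + 1)) → ℝ) : Set (Pt M N Nd) :=
  {z | feas2 α x z ∧ Opp α β lw lv y z ≤ θ}

/-- Residual of the linear constraint. -/
def resid (z : Pt M N Nd) (n : Fin N) (ℓ : Fin (M + 1)) (i : Fin (Nd (ℓ.1 + 1))) : ℝ :=
  z.2.2.2 n ℓ i - ((∑ j : Fin (Nd ℓ.1), z.1 ℓ i j * z.2.2.1 n ℓ.castSucc j) + z.2.1 ℓ i)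

/-- Augmented Lagrangian `L_ρ(w,b,v,u;ξ)`. -/
def ALag (α β lw lv : ℝ) (y : Fin N → Fin (Nd (M + 1)) → ℝ) (ρ : ℝ) (ξ : Us M N Nd)
    (z : Pt M N Nd) : ℝ :=
  Opp α β lw lv y z
    + ∑ n : Fin N, ∑ ℓ : Fin (M + 1), ∑ i : Fin (Nd (ℓ.1 + 1)), ξ n ℓ i * resid z n ℓ i
    + (ρ / 2) * ∑ n : Fin N, ∑ ℓ : Fin (M + 1), ∑ i : Fin (Nd (ℓ.1 + 1)), (resid z n ℓ i) ^ 2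

/-! ### Euclidean norms and the activation -/

/-- Euclidean norm of a finite real vector. -/
def enorm2 {m : ℕ} (t : Fin m → ℝ) : ℝ := Real.sqrt (∑ i, t i ^ 2)

lemma enorm2_eq {m : ℕ} (t : Fin m → ℝ) :
    enorm2 t = ‖(WithLp.toLp 2 t : EuclideanSpace ℝ (Fin m))‖ := by
  simp [enorm2, EuclideanSpace.norm_eq, sq_abs]

lemma enorm2_nonneg {m : ℕ} (t : Fin m → ℝ) : 0 ≤ enorm2 t := Real.sqrt_nonneg _

lemma enorm2_zero {m : ℕ} : enorm2 (0 : Fin m → ℝ) = 0 := by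
  simp [enorm2]

lemma enorm2_sq {m : ℕ} (t : Fin m → ℝ) : enorm2 t ^ 2 = ∑ i, t i ^ 2 :=
  Real.sq_sqrt (Finset.sum_nonneg fun _ _ => sq_nonneg _)

lemma abs_le_enorm2 {m : ℕ} (t : Fin m → ℝ) (i : Fin m) : |t i| ≤ enorm2 t := by
  refine Real.abs_le_sqrt ?_
  exact Finset.single_le_sum (f := fun i => t i ^ 2) (fun _ _ => sq_nonneg _) (Finset.mem_univ i)

lemma enorm2_add_le {m : ℕ} (s t : Fin m → ℝ) : enorm2 (s + t) ≤ enorm2 s + enorm2 t := by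
  simp only [enorm2_eq, WithLp.toLp_add]
  exact norm_add_le _ _

lemma enorm2_mono {m : ℕ} {s t : Fin m → ℝ} (h : ∀ i, |s i| ≤ |t i|) : enorm2 s ≤ enorm2 t :=
  Real.sqrt_le_sqrt (Finset.sum_le_sum fun i _ => sq_le_sq.mpr (h i))

lemma enorm2_le_sum {m : ℕ} {t : Fin m → ℝ} (h : ∀ i, 0 ≤ t i) : enorm2 t ≤ ∑ i, t i :=
  Real.sqrt_le_iff.mpr ⟨Finset.sum_nonneg fun i _ => h i,
    Finset.sum_sq_le_sq_sum_of_nonneg fun i _ => h i⟩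

/-- The sum of the column norms dominates the Euclidean operator norm. -/
lemma enorm2_mulVec_le {m k : ℕ} (A : Fin m → Fin k → ℝ) (t : Fin k → ℝ) :
    enorm2 (fun i => ∑ j, A i j * t j) ≤ (∑ j, enorm2 fun i => A i j) * enorm2 t := by
  have h : (WithLp.toLp 2 (fun i => ∑ j, A i j * t j) : EuclideanSpace ℝ (Fin m))
      = ∑ j, t j • (WithLp.toLp 2 (fun i => A i j) : EuclideanSpace ℝ (Fin m)) := by
    ext i
    simp [mul_comm]
  rw [enorm2_eq, h, Finset.sum_mul]
  refine (norm_sum_le _ _).trans (Finset.sum_le_sum fun j _ => ?_)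
  rw [norm_smul, ← enorm2_eq, mul_comm, Real.norm_eq_abs]
  exact mul_le_mul_of_nonneg_left (abs_le_enorm2 t j) (enorm2_nonneg _)

lemma lrelu_lipschitz {α : ℝ} (h0 : 0 < α) (h1 : α < 1) (a b : ℝ) :
    |lrelu α a - lrelu α b| ≤ |a - b| := by
  unfold lrelu
  refine (abs_max_sub_max_le_max _ _ _ _).trans (max_le le_rfl ?_)
  rw [← mul_sub, abs_mul, abs_of_pos h0]
  exact mul_le_of_le_one_left (abs_nonneg _) h1.le

/-! ### The forward pass -/

/-- Activation of layer `k` of the network with weights `W` and biases `b` at the input `x`. -/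
def fwdV (α : ℝ) (W : Wt M Nd) (b : Bs M Nd) (x : Fin (Nd 0) → ℝ) :
    (k : ℕ) → k < M + 2 → Fin (Nd k) → ℝ
  | 0, _ => x
  | k + 1, h => fun i => lrelu α
      ((∑ j : Fin (Nd k), W ⟨k, by omega⟩ i j * fwdV α W b x k (by omega) j) + b ⟨k, by omega⟩ i)

/-- Pre-activation of the layer after layer `ℓ`. -/
def fwdU (α : ℝ) (W : Wt M Nd) (b : Bs M Nd) (x : Fin (Nd 0) → ℝ) (ℓ : Fin (M + 1)) :
    Fin (Nd (ℓ.1 + 1)) → ℝ :=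
  fun i => (∑ j : Fin (Nd ℓ.1), W ℓ i j * fwdV α W b x ℓ.1 (by omega) j) + b ℓ i

/-- The point with the same weights and biases as `z` whose auxiliary variables are given by the
forward pass at the inputs `x`. -/
def forward (α : ℝ) (x : Fin N → Fin (Nd 0) → ℝ) (z : Pt M N Nd) : Pt M N Nd :=
  (z.1, z.2.1, fun n ℓ => fwdV α z.1 z.2.1 (x n) ℓ.1 ℓ.2, fun n ℓ => fwdU α z.1 z.2.1 (x n) ℓ)

lemma forward_feas1 (α : ℝ) (x : Fin N → Fin (Nd 0) → ℝ) (z : Pt M N Nd) :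
    feas1 α x (forward α x z) :=
  ⟨fun _ => rfl, fun _ _ _ => rfl, fun _ _ _ => rfl⟩

lemma forward_eq_self {α : ℝ} {x : Fin N → Fin (Nd 0) → ℝ} {z : Pt M N Nd} (h : feas1 α x z) :
    forward α x z = z := by
  obtain ⟨hin, hlin, hact⟩ := h
  have hv : ∀ n k (hk : k < M + 2), fwdV α z.1 z.2.1 (x n) k hk = z.2.2.1 n ⟨k, hk⟩ := by
    intro n k
    induction k with
    | zero => intro hk; exact (hin n).symm
    | succ k ih =>
      intro hk
      funext i
      have h1 := hact n ⟨k, by omega⟩ i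
      rw [hlin n ⟨k, by omega⟩ i] at h1
      simp only [fwdV]
      rw [ih (by omega)]
      exact h1.symm
  refine Prod.ext rfl (Prod.ext rfl (Prod.ext ?_ ?_))
  · funext n ℓ
    exact hv n ℓ.1 ℓ.2
  · funext n ℓ i
    refine Eq.trans ?_ (hlin n ℓ i).symm
    change (∑ j : Fin (Nd ℓ.1), z.1 ℓ i j * fwdV α z.1 z.2.1 (x n) ℓ.1 _ j) + z.2.1 ℓ i = _
    rw [hv n ℓ.1 (by omega)]
    rfl

lemma continuous_lrelu (α : ℝ) : Continuous (lrelu α) := by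
  unfold lrelu
  fun_prop

lemma continuous_fwdV (α : ℝ) (x : Fin (Nd 0) → ℝ) (k : ℕ) (hk : k < M + 2) :
    Continuous fun z : Pt M N Nd => fwdV α z.1 z.2.1 x k hk := by
  induction k with
  | zero => exact continuous_const
  | succ k ih =>
    have hc := ih (by omega)
    refine continuous_pi fun i => (continuous_lrelu α).comp ?_
    refine Continuous.add (continuous_finsetSum _ fun j _ => Continuous.mul ?_ ?_) ?_
    · fun_prop
    · exact (continuous_apply j).comp hc
    · fun_prop

lemma continuous_forward (α : ℝ) (x : Fin N → Fin (Nd 0) → ℝ) :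
    Continuous (forward α x : Pt M N Nd → Pt M N Nd) := by
  refine continuous_fst.prodMk ((continuous_fst.comp continuous_snd).prodMk
    (Continuous.prodMk ?_ ?_))
  · exact continuous_pi fun n => continuous_pi fun ℓ => continuous_fwdV α (x n) ℓ.1 ℓ.2
  · refine continuous_pi fun n => continuous_pi fun ℓ => continuous_pi fun i => ?_
    refine Continuous.add (continuous_finsetSum _ fun j _ => Continuous.mul ?_ ?_) ?_
    · fun_prop
    · exact (continuous_apply j).comp (continuous_fwdV α (x n) ℓ.1 (by omega))
    · fun_prop

lemma continuous_Opp (α β lw lv : ℝ) (y : Fin N → Fin (Nd (M + 1)) → ℝ) :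
    Continuous (Opp α β lw lv y : Pt M N Nd → ℝ) := by
  have hl := continuous_lrelu α
  unfold Opp Obar R1 R2
  fun_prop

/-! ### Error of the forward pass -/

/-- Penalty carried by sample `n` in layer `ℓ`. -/
def layerGap (α : ℝ) (z : Pt M N Nd) (n : Fin N) (ℓ : Fin (M + 1)) : ℝ :=
  ∑ i : Fin (Nd (ℓ.1 + 1)), (z.2.2.1 n ℓ.succ i - lrelu α (z.2.2.2 n ℓ i))

lemma layerGap_nonneg {α : ℝ} {z : Pt M N Nd} (h : inCone α z) (n : Fin N) (ℓ : Fin (M + 1)) :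
    0 ≤ layerGap α z n ℓ :=
  Finset.sum_nonneg fun i _ => sub_nonneg.mpr (max_le (h n ℓ i).1 (h n ℓ i).2)

lemma feas1.feas2 {α : ℝ} {x : Fin N → Fin (Nd 0) → ℝ} {z : Pt M N Nd} (h : feas1 α x z) :
    feas2 α x z :=
  ⟨h.1, h.2.1, fun n ℓ i => by
    rw [h.2.2 n ℓ i]
    exact ⟨le_max_left _ _, le_max_right _ _⟩⟩

lemma Opp_eq_Obar {α β lw lv : ℝ} {x : Fin N → Fin (Nd 0) → ℝ}
    {y : Fin N → Fin (Nd (M + 1)) → ℝ} {z : Pt M N Nd} (h : feas1 α x z) :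
    Opp α β lw lv y z = Obar lw lv y z := by
  simp [Opp, h.2.2]

/-- The pre-activation error is the weight matrix applied to the error of the layer before. -/
lemma preact_error {α : ℝ} {x : Fin N → Fin (Nd 0) → ℝ} {z : Pt M N Nd} (hlin : linEq z)
    {Θ : ℝ} (hΘ : ∀ ℓ : Fin (M + 1), ∑ j : Fin (Nd ℓ.1), enorm2 (fun i => z.1 ℓ i j) ≤ Θ)
    (n : Fin N) (ℓ : Fin (M + 1)) :
    enorm2 (z.2.2.2 n ℓ - (forward α x z).2.2.2 n ℓ)
      ≤ Θ * enorm2 (z.2.2.1 n ℓ.castSucc - (forward α x z).2.2.1 n ℓ.castSucc) := by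
  have h : z.2.2.2 n ℓ - (forward α x z).2.2.2 n ℓ = fun i => ∑ j : Fin (Nd ℓ.1),
      z.1 ℓ i j * (z.2.2.1 n ℓ.castSucc - (forward α x z).2.2.1 n ℓ.castSucc) j := by
    funext i
    have h2 : (forward α x z).2.2.2 n ℓ i = (∑ j : Fin (Nd ℓ.1),
        z.1 ℓ i j * (forward α x z).2.2.1 n ℓ.castSucc j) + z.2.1 ℓ i := rfl
    rw [Pi.sub_apply, hlin n ℓ i, h2, add_sub_add_right_eq_sub, ← Finset.sum_sub_distrib]
    exact Finset.sum_congr rfl fun j _ => (mul_sub _ _ _).symm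
  rw [h]
  exact (enorm2_mulVec_le (z.1 ℓ) _).trans
    (mul_le_mul_of_nonneg_right (hΘ ℓ) (enorm2_nonneg _))

lemma act_error {α : ℝ} (h0 : 0 < α) (h1 : α < 1) {x : Fin N → Fin (Nd 0) → ℝ}
    {z : Pt M N Nd} (hc : inCone α z) (n : Fin N) (ℓ : Fin (M + 1)) :
    enorm2 (z.2.2.1 n ℓ.succ - (forward α x z).2.2.1 n ℓ.succ)
      ≤ layerGap α z n ℓ + enorm2 (z.2.2.2 n ℓ - (forward α x z).2.2.2 n ℓ) := by
  have hsplit : z.2.2.1 n ℓ.succ - (forward α x z).2.2.1 n ℓ.succ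
      = (fun i : Fin (Nd (ℓ.1 + 1)) => z.2.2.1 n ℓ.succ i - lrelu α (z.2.2.2 n ℓ i))
        + fun i : Fin (Nd (ℓ.1 + 1)) =>
          lrelu α (z.2.2.2 n ℓ i) - lrelu α ((forward α x z).2.2.2 n ℓ i) := by
    funext i
    rw [Pi.sub_apply, (forward_feas1 α x z).2.2 n ℓ i]
    exact (sub_add_sub_cancel _ _ _).symm
  rw [hsplit]
  refine (enorm2_add_le _ _).trans (add_le_add ?_ ?_)
  · exact enorm2_le_sum fun i => sub_nonneg.mpr (max_le (hc n ℓ i).1 (hc n ℓ i).2)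
  · exact enorm2_mono fun i => lrelu_lipschitz h0 h1 _ _

/-- The layerwise recursion `d_{k+1} ≤ e_{k+1} + Θ d_k` with `d_0 = 0`, solved. -/
lemma layer_error {α : ℝ} (h0 : 0 < α) (h1 : α < 1) {x : Fin N → Fin (Nd 0) → ℝ}
    {z : Pt M N Nd} (hz : feas2 α x z) {Θ : ℝ} (hΘ1 : 1 ≤ Θ)
    (hΘ : ∀ ℓ : Fin (M + 1), ∑ j : Fin (Nd ℓ.1), enorm2 (fun i => z.1 ℓ i j) ≤ Θ)
    (n : Fin N) (k : ℕ) (hk : k < M + 2) :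
    enorm2 (z.2.2.1 n ⟨k, hk⟩ - (forward α x z).2.2.1 n ⟨k, hk⟩)
      ≤ Θ ^ k * ∑ ℓ : Fin (M + 1), if ℓ.1 < k then layerGap α z n ℓ else 0 := by
  induction k with
  | zero =>
    rw [hz.1 n, (forward_feas1 α x z).1 n]
    simp [enorm2]
  | succ k ih =>
    have hk' : k < M + 1 := by omega
    have ha := act_error h0 h1 (x := x) hz.2.2 n ⟨k, hk'⟩
    have hp := preact_error (α := α) (x := x) hz.2.1 hΘ n ⟨k, hk'⟩
    have hi := mul_le_mul_of_nonneg_left (ih (by omega)) (zero_le_one.trans hΘ1)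
    have hsum : (∑ ℓ : Fin (M + 1), if ℓ.1 < k + 1 then layerGap α z n ℓ else 0)
        = (∑ ℓ : Fin (M + 1), if ℓ.1 < k then layerGap α z n ℓ else 0)
          + layerGap α z n ⟨k, hk'⟩ := by
      have he : layerGap α z n ⟨k, hk'⟩
          = ∑ ℓ : Fin (M + 1), if ℓ = ⟨k, hk'⟩ then layerGap α z n ℓ else 0 := by simp
      rw [he, ← Finset.sum_add_distrib]
      refine Finset.sum_congr rfl fun ℓ _ => ?_
      simp only [Fin.ext_iff]
      rcases lt_trichotomy ℓ.1 k with h | h | h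
      · simp [h, h.ne, Nat.lt_succ_of_lt h]
      · simp [h]
      · simp [h.ne', not_lt.mpr h.le, not_lt.mpr (Nat.succ_le_of_lt h)]
    have hg : layerGap α z n ⟨k, hk'⟩ ≤ Θ ^ (k + 1) * layerGap α z n ⟨k, hk'⟩ :=
      le_mul_of_one_le_left (layerGap_nonneg hz.2.2 n _) (one_le_pow₀ hΘ1)
    rw [hsum, mul_add]
    refine ha.trans ?_
    have hi' : Θ * enorm2 (z.2.2.1 n (Fin.castSucc ⟨k, hk'⟩)
        - (forward α x z).2.2.1 n (Fin.castSucc ⟨k, hk'⟩))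
        ≤ Θ ^ (k + 1) * ∑ ℓ : Fin (M + 1), if ℓ.1 < k then layerGap α z n ℓ else 0 := by
      rw [pow_succ', mul_assoc]
      exact hi
    linarith

/-- The distance to the forward pass is controlled by the penalty. -/
lemma l2dist_forward_le {α : ℝ} (h0 : 0 < α) (h1 : α < 1) {x : Fin N → Fin (Nd 0) → ℝ}
    {z : Pt M N Nd} (hz : feas2 α x z) {Θ : ℝ} (hΘ1 : 1 ≤ Θ)
    (hΘ : ∀ ℓ : Fin (M + 1), ∑ j : Fin (Nd ℓ.1), enorm2 (fun i => z.1 ℓ i j) ≤ Θ) :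
    l2dist z (forward α x z)
      ≤ (M + 1 : ℝ) * Θ ^ (M + 1) * ∑ n : Fin N, ∑ ℓ : Fin (M + 1), layerGap α z n ℓ := by
  have hΘ0 : 0 ≤ Θ := zero_le_one.trans hΘ1
  set E : Fin N → ℝ := fun n => ∑ ℓ : Fin (M + 1), layerGap α z n ℓ with hE
  have hE0 : ∀ n, 0 ≤ E n := fun n => Finset.sum_nonneg fun ℓ _ => layerGap_nonneg hz.2.2 n ℓ
  set dv : Fin N → Fin (M + 2) → ℝ :=
    fun n ℓ => enorm2 (z.2.2.1 n ℓ - (forward α x z).2.2.1 n ℓ) with hdv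
  set du : Fin N → Fin (M + 1) → ℝ :=
    fun n ℓ => enorm2 (z.2.2.2 n ℓ - (forward α x z).2.2.2 n ℓ) with hdu
  have hv : ∀ n (ℓ : Fin (M + 2)), dv n ℓ ≤ Θ ^ ℓ.1 * E n := by
    intro n ℓ
    refine (layer_error h0 h1 hz hΘ1 hΘ n ℓ.1 ℓ.2).trans
      (mul_le_mul_of_nonneg_left (Finset.sum_le_sum fun j _ => ?_) (pow_nonneg hΘ0 _))
    split_ifs
    · exact le_rfl
    · exact layerGap_nonneg hz.2.2 n j
  have hv0 : ∀ n, dv n 0 = 0 := by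
    intro n
    have h : z.2.2.1 n 0 = (forward α x z).2.2.1 n 0 :=
      (hz.1 n).trans ((forward_feas1 α x z).1 n).symm
    simp only [hdv, h, sub_self]
    exact enorm2_zero
  have hu : ∀ n (ℓ : Fin (M + 1)), du n ℓ ≤ Θ * dv n ℓ.castSucc :=
    fun n ℓ => preact_error hz.2.1 hΘ n ℓ
  set B : Fin N → ℝ := fun n => Θ ^ (M + 1) * E n with hB
  have hvB : ∀ n (ℓ : Fin (M + 1)), dv n ℓ.succ ^ 2 ≤ B n ^ 2 := by
    intro n ℓ
    refine pow_le_pow_left₀ (enorm2_nonneg _) ((hv n _).trans ?_) 2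
    exact mul_le_mul_of_nonneg_right
      (pow_le_pow_right₀ hΘ1 (by simp only [Fin.val_succ]; omega)) (hE0 n)
  have hu0 : ∀ n, du n 0 = 0 := by
    intro n
    have h := hu n 0
    rw [Fin.castSucc_zero, hv0, mul_zero] at h
    exact le_antisymm h (enorm2_nonneg _)
  have huB : ∀ n (ℓ : Fin M), du n ℓ.succ ^ 2 ≤ B n ^ 2 := by
    intro n ℓ
    refine pow_le_pow_left₀ (enorm2_nonneg _) ((hu n _).trans ?_) 2
    refine (mul_le_mul_of_nonneg_left (hv n _) hΘ0).trans ?_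
    rw [← mul_assoc, ← pow_succ']
    refine mul_le_mul_of_nonneg_right (pow_le_pow_right₀ hΘ1 ?_) (hE0 n)
    simp only [Fin.val_castSucc, Fin.val_succ]
    omega
  have hsv : ∀ n, ∑ ℓ : Fin (M + 2), dv n ℓ ^ 2 ≤ (M + 1 : ℝ) * B n ^ 2 := by
    intro n
    rw [Fin.sum_univ_succ, hv0]
    have := Finset.sum_le_card_nsmul Finset.univ _ _ fun ℓ _ => hvB n ℓ
    simpa using this
  have hsu : ∀ n, ∑ ℓ : Fin (M + 1), du n ℓ ^ 2 ≤ (M : ℝ) * B n ^ 2 := by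
    intro n
    rw [Fin.sum_univ_succ, hu0]
    have := Finset.sum_le_card_nsmul Finset.univ _ _ fun ℓ _ => huB n ℓ
    simpa using this
  have hdist : l2dist z (forward α x z)
      = Real.sqrt ((∑ n, ∑ ℓ, dv n ℓ ^ 2) + ∑ n, ∑ ℓ, du n ℓ ^ 2) := by
    simp only [hdv, hdu, enorm2_sq, l2dist]
    simp [forward]
  rw [hdist]
  refine Real.sqrt_le_iff.mpr ⟨mul_nonneg (by positivity) (Finset.sum_nonneg fun n _ => hE0 n), ?_⟩
  calc (∑ n, ∑ ℓ, dv n ℓ ^ 2) + ∑ n, ∑ ℓ, du n ℓ ^ 2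
      ≤ (∑ n, (M + 1 : ℝ) * B n ^ 2) + ∑ n, (M : ℝ) * B n ^ 2 :=
        add_le_add (Finset.sum_le_sum fun n _ => hsv n) (Finset.sum_le_sum fun n _ => hsu n)
    _ = (2 * M + 1 : ℝ) * ∑ n, B n ^ 2 := by
        rw [← Finset.mul_sum, ← Finset.mul_sum]; ring
    _ ≤ (M + 1 : ℝ) ^ 2 * (∑ n, B n) ^ 2 := by
        refine mul_le_mul (by nlinarith [sq_nonneg (M : ℝ)])
          (Finset.sum_sq_le_sq_sum_of_nonneg fun n _ => ?_)
          (Finset.sum_nonneg fun n _ => sq_nonneg _) (sq_nonneg _)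
        exact mul_nonneg (pow_nonneg hΘ0 _) (hE0 n)
    _ = ((M + 1 : ℝ) * Θ ^ (M + 1) * ∑ n, E n) ^ 2 := by
        simp only [hB, ← Finset.mul_sum]; ring

/-! ### Weights in the level set -/

lemma R1_le_Obar {lw lv : ℝ} (hlv : 0 < lv) (y : Fin N → Fin (Nd (M + 1)) → ℝ)
    (z : Pt M N Nd) : R1 lw z.1 ≤ Obar lw lv y z := by
  have h1 : 0 ≤ (1 / (N : ℝ)) * ∑ n : Fin N, ∑ i : Fin (Nd (M + 1)),
      (z.2.2.1 n (Fin.last (M + 1)) i - y n i) ^ 2 :=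
    mul_nonneg (by positivity)
      (Finset.sum_nonneg fun _ _ => Finset.sum_nonneg fun _ _ => sq_nonneg _)
  have h2 : 0 ≤ R2 lv z.2.2.1 :=
    mul_nonneg hlv.le (Finset.sum_nonneg fun _ _ => Finset.sum_nonneg fun _ _ =>
      Finset.sum_nonneg fun _ _ => sq_nonneg _)
  unfold Obar
  linarith

lemma Opp_eq_add (α β lw lv : ℝ) (y : Fin N → Fin (Nd (M + 1)) → ℝ) (z : Pt M N Nd) :
    Opp α β lw lv y z
      = Obar lw lv y z + β * ∑ n : Fin N, ∑ ℓ : Fin (M + 1), layerGap α z n ℓ := rfl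

lemma colSum_le_thw {α β lw lv θ : ℝ} (hβ : 0 < β) (hlw : 0 < lw) (hlv : 0 < lv)
    (hN0 : 1 ≤ Nd 0) {x : Fin N → Fin (Nd 0) → ℝ} {y : Fin N → Fin (Nd (M + 1)) → ℝ}
    {z : Pt M N Nd} (hz : z ∈ levelSet α β lw lv θ x y) (ℓ : Fin (M + 1)) :
    ∑ j : Fin (Nd ℓ.1), enorm2 (fun i => z.1 ℓ i j) ≤ thw M Nd θ lw := by
  obtain ⟨hf, hO⟩ := hz
  have hP : 0 ≤ ∑ n : Fin N, ∑ ℓ : Fin (M + 1), layerGap α z n ℓ :=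
    Finset.sum_nonneg fun n _ => Finset.sum_nonneg fun ℓ _ => layerGap_nonneg hf.2.2 n ℓ
  have hR : R1 lw z.1 ≤ θ := by
    have h1 := R1_le_Obar (lw := lw) hlv y z
    rw [Opp_eq_add] at hO
    have := mul_nonneg hβ.le hP
    linarith
  set S : Fin (M + 1) → ℝ := fun ℓ => ∑ j : Fin (Nd ℓ.1), enorm2 (fun i => z.1 ℓ i j) with hS
  have hS0 : ∀ ℓ, 0 ≤ S ℓ := fun ℓ => Finset.sum_nonneg fun j _ => enorm2_nonneg _
  have hR' : lw * ∑ ℓ, S ℓ ≤ θ := hR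
  have hsum : ∑ ℓ, S ℓ ≤ θ / lw := by
    rw [le_div_iff₀ hlw, mul_comm]
    exact hR'
  have hone : S ℓ ≤ ∑ ℓ, S ℓ := Finset.single_le_sum (fun ℓ _ => hS0 ℓ) (Finset.mem_univ ℓ)
  have hnn : 0 ≤ θ / lw := (Finset.sum_nonneg fun ℓ _ => hS0 ℓ).trans hsum
  refine (hone.trans hsum).trans (le_mul_of_one_le_right hnn (Real.one_le_sqrt.mpr ?_))
  have hcast : (1 : ℝ) ≤ (Nd 0 : ℝ) := by exact_mod_cast hN0
  have hpos : 0 ≤ ∑ ℓ : Fin (M + 1), (Nd (ℓ.1 + 1) : ℝ) :=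
    Finset.sum_nonneg fun _ _ => Nat.cast_nonneg _
  linarith

/-- Passing to the forward pass does not increase the penalized objective, which equals `Obar` at
the forward pass. -/
lemma Obar_forward_le {α β lw lv θ LO : ℝ} (hα0 : 0 < α) (hα1 : α < 1) (hβ : 0 < β)
    (hlw : 0 < lw) (hlv : 0 < lv) (hN0 : 1 ≤ Nd 0)
    {x : Fin N → Fin (Nd 0) → ℝ} {y : Fin N → Fin (Nd (M + 1)) → ℝ}
    (hLip : ∀ z z' : Pt M N Nd, z ∈ levelSet α β lw lv θ x y →
      z' ∈ levelSet α β lw lv θ x y →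
      |Obar lw lv y z - Obar lw lv y z'| ≤ LO * l2dist z z')
    (hbig : (M + 1 : ℝ) * LO * max (thw M Nd θ lw) 1 ^ (M + 1) < β)
    {z : Pt M N Nd} (hz : z ∈ levelSet α β lw lv θ x y)
    (hz' : forward α x z ∈ levelSet α β lw lv θ x y) :
    Obar lw lv y (forward α x z) ≤ Opp α β lw lv y z := by
  set P := ∑ n : Fin N, ∑ ℓ : Fin (M + 1), layerGap α z n ℓ with hPdef
  have hP : 0 ≤ P :=
    Finset.sum_nonneg fun n _ => Finset.sum_nonneg fun ℓ _ => layerGap_nonneg hz.1.2.2 n ℓ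
  have hd := l2dist_forward_le hα0 hα1 hz.1 (Θ := max (thw M Nd θ lw) 1) (le_max_right _ _)
    fun ℓ => (colSum_le_thw hβ hlw hlv hN0 hz ℓ).trans (le_max_left _ _)
  have hd0 : 0 ≤ l2dist z (forward α x z) := Real.sqrt_nonneg _
  have hl := (neg_abs_le _).trans' (neg_le_neg (hLip _ _ hz hz'))
  have hLd : LO * l2dist z (forward α x z) ≤ β * P := by
    -- The Lipschitz hypothesis alone does not force `LO ≥ 0`.
    rcases le_total 0 LO with h | h
    · calc LO * l2dist z (forward α x z)
          ≤ LO * ((M + 1 : ℝ) * max (thw M Nd θ lw) 1 ^ (M + 1) * P) :=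
            mul_le_mul_of_nonneg_left hd h
        _ = ((M + 1 : ℝ) * LO * max (thw M Nd θ lw) 1 ^ (M + 1)) * P := by ring
        _ ≤ β * P := mul_le_mul_of_nonneg_right hbig.le hP
    · exact (mul_nonpos_of_nonpos_of_nonneg h hd0).trans (mul_nonneg hβ.le hP)
  rw [Opp_eq_add]
  linarith

/-- exact penalty, local minimizers of (P): for a point of `Ω₁`
with penalized objective value `< θ`, being a local minimizer of `Ō` over `Ω₁`
is equivalent to being a local minimizer of `O` over `Ω₂`. -/
theorem exact_penalty_local_P
    (M N : ℕ) (Nd : ℕ → ℕ) (hN : 1 ≤ N) (hNd : ∀ ℓ ≤ M + 1, 1 ≤ Nd ℓ)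
    (α β lw lv θ LO : ℝ) (hα0 : 0 < α) (hα1 : α < 1) (hβ : 0 < β)
    (hlw : 0 < lw) (hlv : 0 < lv)
    (x : Fin N → Fin (Nd 0) → ℝ) (y : Fin N → Fin (Nd (M + 1)) → ℝ)
    (hθ : (1 / (N : ℝ)) * ∑ n : Fin N, ∑ i : Fin (Nd (M + 1)), (y n i) ^ 2 < θ)
    (hLip : ∀ z z' : Pt M N Nd, z ∈ levelSet α β lw lv θ x y →
      z' ∈ levelSet α β lw lv θ x y →
      |Obar lw lv y z - Obar lw lv y z'| ≤ LO * l2dist z z')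
    (hbig : (M + 1 : ℝ) * LO * max (thw M Nd θ lw) 1 ^ (M + 1) < β)
    (zs : Pt M N Nd) (hfeas : feas1 α x zs) (hlt : Opp α β lw lv y zs < θ) :
    (∃ ε > (0 : ℝ), ∀ z : Pt M N Nd, feas1 α x z → dist z zs < ε →
        Obar lw lv y zs ≤ Obar lw lv y z) ↔
    (∃ ε > (0 : ℝ), ∀ z : Pt M N Nd, feas2 α x z → dist z zs < ε →
        Opp α β lw lv y zs ≤ Opp α β lw lv y z) := by
  constructor
  · rintro ⟨ε, hε, hmin⟩
    have hfix := forward_eq_self hfeas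
    have hcont := (continuous_Opp α β lw lv y : Continuous (_ : Pt M N Nd → ℝ))
    have hfwd : Tendsto (forward α x) (𝓝 zs) (𝓝 zs) := by
      have := (continuous_forward (M := M) α x).tendsto zs
      rwa [hfix] at this
    have hO : ∀ᶠ z in 𝓝 zs, Opp α β lw lv y z < θ := hcont.continuousAt.eventually_lt_const hlt
    obtain ⟨δ, hδ, hball⟩ := Metric.eventually_nhds_iff.mp
      ((hO.and (hfwd.eventually hO)).and (hfwd.eventually (Metric.ball_mem_nhds zs hε)))
    refine ⟨δ, hδ, fun z hz hzd => ?_⟩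
    obtain ⟨⟨hOz, hOf⟩, hdist⟩ := hball hzd
    have hff := forward_feas1 α x z
    rw [Opp_eq_Obar hfeas]
    exact (hmin _ hff hdist).trans (Obar_forward_le hα0 hα1 hβ hlw hlv (hNd 0 (Nat.zero_le _))
      hLip hbig ⟨hz, hOz.le⟩ ⟨hff.feas2, hOf.le⟩)
  · rintro ⟨ε, hε, hmin⟩
    refine ⟨ε, hε, fun z hz hzd => ?_⟩
    have h := hmin z hz.feas2 hzd
    rwa [Opp_eq_Obar hfeas, Opp_eq_Obar hz] at h
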